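/- arXiv:2205.07427 — 8 statements merged into one kernel-verified Lean document; each statement's English description precedes it below -/
import Mathlib

section
/- Let (Ω, μ) be a measure space and g : Ω → ℝ integrable with ∫_Ω g dμ = 0. Let Ω^r ⊆ Ω be measurable with μ(Ω^r) > 0 and g(x) < 0 for every x ∈ Ω^r. Fix ω > 1 and set w(x) = ω for x ∈ Ω^r and w(x) = 1 otherwise; suppose the weighted generalization error Err^w : ℝ → ℝ is differentiable, is unimodal with minimizer c'^* (strictly decreasing on (-∞, c'^*], strictly increasing on [c'^*, ∞)), and its derivative at c* equals ∫_Ω w(x)·g(x) dμ(x) (differentiation under the integral sign). Then c'^* > c*. (Paper's Proposition 3: placing a constant weight ω > 1 on a region of hard samples, each with LDC > 1, while keeping weight 1 elsewhere, makes the new optimal model complexity strictly larger.) -/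
open MeasureTheory

/-- Paper's Proposition 3: placing a constant weight `ω > 1` on a region `Ωr` of hard
samples (per-sample derivative `g` negative there, i.e. LDC > 1), keeping weight `1`
elsewhere, makes the new optimal model complexity `c'` strictly larger than `cstar`. -/
theorem prop3_harder_weighting_increases_complexity
    {Ω : Type*} [MeasurableSpace Ω] (μ : Measure Ω)
    (g : Ω → ℝ) (hg : Integrable g μ) (hg0 : ∫ x, g x ∂μ = 0)
    (Ωr : Set Ω) (hΩr : MeasurableSet Ωr) (hΩrpos : 0 < μ Ωr)
    (hneg : ∀ x ∈ Ωr, g x < 0)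
    (ω : ℝ) (hω : 1 < ω)
    (w : Ω → ℝ) (hwin : ∀ x ∈ Ωr, w x = ω) (hwout : ∀ x ∉ Ωr, w x = 1)
    (Errw : ℝ → ℝ) (cstar c' : ℝ)
    (hdiff : Differentiable ℝ Errw)
    (hanti : StrictAntiOn Errw (Set.Iic c'))
    (hmono : StrictMonoOn Errw (Set.Ici c'))
    (hderiv : deriv Errw cstar = ∫ x, w x * g x ∂μ) :
    c' > cstar := by
  have hI : 0 < ∫ x in Ωr, (-g x) ∂μ := by
    rw [setIntegral_pos_iff_support_of_nonneg_ae]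
    · have : Function.support (fun x => -g x) ∩ Ωr = Ωr := by
        ext x
        simp only [Set.mem_inter_iff, Function.mem_support, ne_eq, neg_eq_zero,
          and_iff_right_iff_imp]
        exact fun hx => (hneg x hx).ne
      rw [this]
      exact hΩrpos
    · filter_upwards [ae_restrict_mem hΩr] with x hx
      have := hneg x hx
      simp only [Pi.zero_apply]
      linarith
    · exact hg.neg.integrableOn
  rw [integral_neg] at hI
  have hw : ∀ x, w x * g x = g x + (ω - 1) * Ωr.indicator g x := by
    intro x
    by_cases hx : x ∈ Ωr
    · rw [hwin x hx, Set.indicator_of_mem hx]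
      ring
    · rw [hwout x hx, Set.indicator_of_notMem hx]
      ring
  have hE : deriv Errw cstar = (ω - 1) * ∫ x in Ωr, g x ∂μ := by
    rw [hderiv]
    simp_rw [hw]
    rw [integral_add hg ((hg.indicator hΩr).const_mul _), hg0, integral_const_mul,
      integral_indicator hΩr, zero_add]
  have hlt : deriv Errw cstar < 0 := by
    rw [hE]
    exact mul_neg_of_pos_of_neg (by linarith) (by linarith)
  by_contra hc
  have hc : c' ≤ cstar := not_lt.mp hc
  have h1 : 0 ≤ derivWithin Errw (Set.Ici c') cstar := hmono.monotoneOn.derivWithin_nonneg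
  rw [(hdiff cstar).derivWithin (uniqueDiffOn_Ici c' cstar hc)] at h1
  linarith
end

section
/- Let (Ω, μ) be a measure space, let g : Ω → ℝ, and let ω₀ : Ω → ℝ be a nonnegative measurable original weight with ω₀·g integrable and ∫_Ω ω₀(x)·g(x) dμ(x) = 0 (first-order optimality of c* for the originally weighted error). Let Ω^r ⊆ Ω be measurable with μ(Ω^r) > 0 and g(x) < 0 for every x ∈ Ω^r. Let ω̃ : Ω → ℝ be a nonnegative measurable weight with ω̃·g integrable, ω̃(x) > ω₀(x) for every x ∈ Ω^r, and ω̃(x) = ω₀(x) for x ∉ Ω^r. Suppose the new weighted generalization error Err^{ω̃} : ℝ → ℝ is differentiable, unimodal with minimizer c̃* (strictly decreasing on (-∞, c̃*], strictly increasing on [c̃*, ∞)), and its derivative at c* equals ∫_Ω ω̃(x)·g(x) dμ(x). Then c̃* > c*. (Paper's Corollary 1: increasing the weights on a region of samples with LDC > 1, keeping all other weights unchanged, makes the new optimal model complexity strictly larger.) -/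
open MeasureTheory

/-- Paper's Corollary 1: increasing the weights on a region `Ωr` of samples with
LDC > 1 (per-sample derivative `g` negative there), keeping weights elsewhere unchanged,
makes the new optimal model complexity `ctilde` strictly larger than `cstar`. -/
theorem cor1_increasing_hard_weights
    {Ω : Type*} [MeasurableSpace Ω] (μ : Measure Ω)
    (g : Ω → ℝ)
    (ω₀ : Ω → ℝ) (hω₀nn : ∀ x, 0 ≤ ω₀ x) (hω₀meas : Measurable ω₀)
    (hω₀g : Integrable (fun x => ω₀ x * g x) μ)
    (hopt : ∫ x, ω₀ x * g x ∂μ = 0)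
    (Ωr : Set Ω) (hΩr : MeasurableSet Ωr) (hΩrpos : 0 < μ Ωr)
    (hneg : ∀ x ∈ Ωr, g x < 0)
    (ωt : Ω → ℝ) (hωtnn : ∀ x, 0 ≤ ωt x) (hωtmeas : Measurable ωt)
    (hωtg : Integrable (fun x => ωt x * g x) μ)
    (hgt : ∀ x ∈ Ωr, ω₀ x < ωt x)
    (heq : ∀ x ∉ Ωr, ωt x = ω₀ x)
    (Errw : ℝ → ℝ) (cstar ctilde : ℝ)
    (hdiff : Differentiable ℝ Errw)
    (hanti : StrictAntiOn Errw (Set.Iic ctilde))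
    (hmono : StrictMonoOn Errw (Set.Ici ctilde))
    (hderiv : deriv Errw cstar = ∫ x, ωt x * g x ∂μ) :
    ctilde > cstar := by
  have hint : 0 < ∫ x, (ω₀ x * g x - ωt x * g x) ∂μ := by
    have hnn : ∀ x, 0 ≤ ω₀ x * g x - ωt x * g x := by
      intro x
      by_cases hx : x ∈ Ωr
      · nlinarith [hneg x hx, hgt x hx, mul_pos (neg_pos.2 (hneg x hx)) (sub_pos.2 (hgt x hx))]
      · rw [heq x hx, sub_self]
    rw [integral_pos_iff_support_of_nonneg hnn (hω₀g.sub hωtg)]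
    refine lt_of_lt_of_le hΩrpos (measure_mono ?_)
    intro x hx
    have := mul_pos (neg_pos.2 (hneg x hx)) (sub_pos.2 (hgt x hx))
    rw [Function.mem_support]
    intro h
    nlinarith
  rw [integral_sub hω₀g hωtg, hopt, ← hderiv] at hint
  by_contra hle
  have hle : ctilde ≤ cstar := not_lt.1 hle
  have hm : MonotoneOn Errw (Set.Ici cstar) :=
    hmono.monotoneOn.mono (Set.Ici_subset_Ici.2 hle)
  have h0 : 0 ≤ derivWithin Errw (Set.Ici cstar) cstar := hm.derivWithin_nonneg
  rw [(hdiff cstar).derivWithin (uniqueDiffOn_Ici cstar cstar Set.self_mem_Ici)] at h0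
  linarith
end

section
/- Let (Ω, μ) be a measure space and g : Ω → ℝ integrable with ∫_Ω g dμ = 0. Let Ω^r ⊆ Ω be measurable with μ(Ω^r) > 0 and g(x) > 0 for every x ∈ Ω^r. Fix ω > 1 and set w(x) = ω for x ∈ Ω^r and w(x) = 1 otherwise; then ∫_Ω w(x)·g(x) dμ(x) = (ω − 1)·∫_{Ω^r} g dμ > 0. Moreover, if the weighted generalization error Err^w : ℝ → ℝ is differentiable, unimodal with minimizer c'^* (strictly decreasing on (-∞, c'^*], strictly increasing on [c'^*, ∞)), and its derivative at c* equals ∫_Ω w(x)·g(x) dμ(x), then c'^* < c*. (Paper's Proposition 4: placing a constant weight ω > 1 on a region of easy samples, each with LDC < 1, while keeping weight 1 elsewhere, makes the new optimal model complexity strictly smaller.) -/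
open MeasureTheory

/-- Paper's Proposition 4: placing a constant weight `ω > 1` on a region `Ωr` of easy
samples (per-sample derivative `g` positive there, i.e. LDC < 1), keeping weight `1`
elsewhere, gives `∫ w·g = (ω - 1) ∫_{Ωr} g > 0`, and consequently the new optimal model
complexity is strictly smaller than `cstar`. -/
theorem prop4_easy_weighting_decreases_complexity
    {Ω : Type*} [MeasurableSpace Ω] (μ : Measure Ω)
    (g : Ω → ℝ) (hg : Integrable g μ) (hg0 : ∫ x, g x ∂μ = 0)
    (Ωr : Set Ω) (hΩr : MeasurableSet Ωr) (hΩrpos : 0 < μ Ωr)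
    (hpos : ∀ x ∈ Ωr, 0 < g x)
    (ω : ℝ) (hω : 1 < ω)
    (w : Ω → ℝ) (hwin : ∀ x ∈ Ωr, w x = ω) (hwout : ∀ x ∉ Ωr, w x = 1)
    (cstar : ℝ) :
    (∫ x, w x * g x ∂μ = (ω - 1) * ∫ x in Ωr, g x ∂μ ∧
        0 < ∫ x, w x * g x ∂μ) ∧
      (∀ (Errw : ℝ → ℝ) (c' : ℝ), Differentiable ℝ Errw →
        StrictAntiOn Errw (Set.Iic c') → StrictMonoOn Errw (Set.Ici c') →
        deriv Errw cstar = ∫ x, w x * g x ∂μ → c' < cstar) := by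
  have h1 : ∫ x, w x * g x ∂μ = (ω - 1) * ∫ x in Ωr, g x ∂μ := by
    have he : (fun x => w x * g x) = fun x => g x + (ω - 1) * Ωr.indicator g x := by
      funext x
      by_cases hx : x ∈ Ωr
      · simp only [hwin x hx, Set.indicator_of_mem hx]; ring
      · simp [hwout x hx, Set.indicator_of_notMem hx]
    rw [he, integral_add hg ((hg.indicator hΩr).const_mul _), hg0, integral_const_mul,
      integral_indicator hΩr, zero_add]
  have h2 : 0 < ∫ x in Ωr, g x ∂μ := by
    rw [setIntegral_pos_iff_support_of_nonneg_ae _ hg.integrableOn]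
    · have : Function.support g ∩ Ωr = Ωr :=
        Set.inter_eq_right.mpr fun x hx => (hpos x hx).ne'
      rwa [this]
    · exact (ae_restrict_iff' hΩr).mpr (Filter.Eventually.of_forall fun x hx => (hpos x hx).le)
  have h3 : 0 < ∫ x, w x * g x ∂μ := by
    rw [h1]; exact mul_pos (by linarith) h2
  refine ⟨⟨h1, h3⟩, ?_⟩
  intro Errw c' hd ha _ hder
  by_contra! hc
  have hanti : AntitoneOn Errw (Set.Iic cstar) :=
    ha.antitoneOn.mono (Set.Iic_subset_Iic.mpr hc)
  have hle : derivWithin Errw (Set.Iic cstar) cstar ≤ 0 := hanti.derivWithin_nonpos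
  rw [(hd cstar).derivWithin (uniqueDiffOn_Iic cstar cstar Set.self_mem_Iic), hder] at hle
  linarith
end

section
/- Let (Ω, μ) be a measure space, ld : Ω → ℝ a measurable learning-difficulty function, c* ∈ ℝ, and g : Ω → ℝ integrable with ∫_Ω g dμ = 0, satisfying the sign condition: g(x) > 0 whenever ld(x) < c*, g(x) < 0 whenever ld(x) > c*, and g(x) = 0 whenever ld(x) = c*. Let u : ℝ → ℝ be nonnegative and monotone nondecreasing, set w = u ∘ ld, and assume w·g is integrable and μ({x : g(x) ≠ 0 and w(x) ≠ u(c*)}) > 0. Then ∫_Ω w(x)·g(x) dμ(x) < 0; consequently, if the weighted generalization error Err^w : ℝ → ℝ is differentiable, unimodal with minimizer c'^* (strictly decreasing on (-∞, c'^*], strictly increasing on [c'^*, ∞)), and its derivative at c* equals ∫_Ω w(x)·g(x) dμ(x), then c'^* > c*. (Paper's Proposition 5: weighting samples by a nondecreasing, non-constant function of their learning difficulty makes the new optimal model complexity strictly larger than the original optimal complexity c*.) -/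
open MeasureTheory

/-- Paper's Proposition 5: weighting samples by a nonnegative nondecreasing, non-constant
(in the stated sense) function `u` of their learning difficulty `ld` makes the derivative
of the weighted generalization error at `cstar` strictly negative, hence the new optimal
model complexity strictly larger than `cstar`. -/
theorem prop5_nondecreasing_weighting
    {Ω : Type*} [MeasurableSpace Ω] (μ : Measure Ω)
    (ld : Ω → ℝ) (hld : Measurable ld) (cstar : ℝ)
    (g : Ω → ℝ) (hg : Integrable g μ) (hg0 : ∫ x, g x ∂μ = 0)
    (hpos : ∀ x, ld x < cstar → 0 < g x)
    (hneg : ∀ x, cstar < ld x → g x < 0)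
    (hzero : ∀ x, ld x = cstar → g x = 0)
    (u : ℝ → ℝ) (hunn : ∀ t, 0 ≤ u t) (humono : Monotone u)
    (w : Ω → ℝ) (hw : ∀ x, w x = u (ld x))
    (hwg : Integrable (fun x => w x * g x) μ)
    (hnd : 0 < μ {x | g x ≠ 0 ∧ w x ≠ u cstar}) :
    ∫ x, w x * g x ∂μ < 0 ∧
      (∀ (Errw : ℝ → ℝ) (c' : ℝ), Differentiable ℝ Errw →
        StrictAntiOn Errw (Set.Iic c') → StrictMonoOn Errw (Set.Ici c') →
        deriv Errw cstar = ∫ x, w x * g x ∂μ → c' > cstar) := by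
  have key : ∫ x, w x * g x ∂μ < 0 := by
    have hint : Integrable (fun x => u cstar * g x - w x * g x) μ :=
      (hg.const_mul (u cstar)).sub hwg
    have hnn : 0 ≤ fun x => u cstar * g x - w x * g x := by
      intro x
      simp only [Pi.zero_apply]
      rw [hw x]
      rcases lt_trichotomy (ld x) cstar with h | h | h
      · nlinarith [mul_nonneg (sub_nonneg.2 (humono h.le)) (hpos x h).le]
      · simp [hzero x h]
      · nlinarith [mul_nonneg (sub_nonneg.2 (humono h.le)) (neg_nonneg.2 (hneg x h).le)]
    have hsupp : Function.support (fun x => u cstar * g x - w x * g x)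
        = {x | g x ≠ 0 ∧ w x ≠ u cstar} := by
      ext x
      simp only [Function.mem_support, Set.mem_setOf_eq, ← sub_mul, ne_eq, mul_eq_zero,
        not_or, sub_eq_zero]
      rw [eq_comm (a := u cstar), and_comm]
    have h := (integral_pos_iff_support_of_nonneg hnn hint).2 (by rw [hsupp]; exact hnd)
    rw [integral_sub (hg.const_mul (u cstar)) hwg, integral_const_mul, hg0] at h
    linarith
  refine ⟨key, ?_⟩
  intro Errw c' hd _ hmono hder
  by_contra hc
  have hc : c' ≤ cstar := not_lt.1 hc
  have hm : MonotoneOn Errw (Set.Ici cstar) :=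
    hmono.monotoneOn.mono (Set.Ici_subset_Ici.2 hc)
  have h1 : 0 ≤ derivWithin Errw (Set.Ici cstar) cstar := hm.derivWithin_nonneg
  rw [(hd cstar).derivWithin (uniqueDiffOn_Ici cstar cstar Set.self_mem_Ici), hder] at h1
  linarith
end

section
/- Let (Ω, μ) be a measure space, c* > 0, and let 0 < τ_e < 1 < τ_h. Let ld : Ω → ℝ be measurable and partition Ω into the easy region Ω^e = {x : ld(x) ≤ τ_e·c*}, the medium region Ω^m = {x : τ_e·c* < ld(x) ≤ τ_h·c*}, and the hard region Ω^h = {x : ld(x) > τ_h·c*}, with μ(Ω^e) > 0 and μ(Ω^h) > 0. Let g : Ω → ℝ be integrable with ∫_Ω g dμ = 0 and satisfying: g(x) > 0 whenever ld(x) < c*, g(x) < 0 whenever ld(x) > c*, and g(x) = 0 whenever ld(x) = c*. Let w take the constant nonnegative value ω_e on Ω^e, ω_m on Ω^m, and ω_h on Ω^h, with ω_e ≤ ω_m ≤ ω_h and ω_e < ω_h, and assume w·g is integrable. Then ∫_Ω w(x)·g(x) dμ(x) < 0; consequently, if the weighted generalization error Err^w : ℝ → ℝ is differentiable, unimodal with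 minimizer c'^*, and its derivative at c* equals ∫_Ω w(x)·g(x) dμ(x), then c'^* > c*. (Paper's Corollary 2: region weights nondecreasing from easy to hard samples, with strictly larger weight on hard than on easy, make the new optimal model complexity strictly larger.) -/
open MeasureTheory

/-- Paper's Corollary 2: constant region weights nondecreasing from the easy region
through the medium region to the hard region, strictly larger on hard than on easy,
make the derivative of the weighted error at `cstar` strictly negative, hence the new
optimal model complexity strictly larger than `cstar`. -/
theorem cor2_region_weights_increasing
    {Ω : Type*} [MeasurableSpace Ω] (μ : Measure Ω)
    (cstar : ℝ) (hcstar : 0 < cstar)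
    (τe τh : ℝ) (hτe0 : 0 < τe) (hτe1 : τe < 1) (hτh : 1 < τh)
    (ld : Ω → ℝ) (hld : Measurable ld)
    (hμe : 0 < μ {x | ld x ≤ τe * cstar})
    (hμh : 0 < μ {x | τh * cstar < ld x})
    (g : Ω → ℝ) (hg : Integrable g μ) (hg0 : ∫ x, g x ∂μ = 0)
    (hpos : ∀ x, ld x < cstar → 0 < g x)
    (hneg : ∀ x, cstar < ld x → g x < 0)
    (hzero : ∀ x, ld x = cstar → g x = 0)
    (ωe ωm ωh : ℝ) (hωe : 0 ≤ ωe) (hωm : 0 ≤ ωm) (hωh : 0 ≤ ωh)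
    (hem : ωe ≤ ωm) (hmh : ωm ≤ ωh) (heh : ωe < ωh)
    (w : Ω → ℝ)
    (hwe : ∀ x, ld x ≤ τe * cstar → w x = ωe)
    (hwm : ∀ x, τe * cstar < ld x → ld x ≤ τh * cstar → w x = ωm)
    (hwh : ∀ x, τh * cstar < ld x → w x = ωh)
    (hwg : Integrable (fun x => w x * g x) μ) :
    ∫ x, w x * g x ∂μ < 0 ∧
      (∀ (Errw : ℝ → ℝ) (c' : ℝ), Differentiable ℝ Errw →
        StrictAntiOn Errw (Set.Iic c') → StrictMonoOn Errw (Set.Ici c') →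
        deriv Errw cstar = ∫ x, w x * g x ∂μ → c' > cstar) := by
  have he1 : τe * cstar < cstar := by nlinarith
  have hh1 : cstar < τh * cstar := by nlinarith
  have hI : ∫ x, w x * g x ∂μ < 0 := by
    have hf : Integrable (fun x => ωm * g x - w x * g x) μ := (hg.const_mul ωm).sub hwg
    have hint : ∫ x, (ωm * g x - w x * g x) ∂μ = - ∫ x, w x * g x ∂μ := by
      rw [integral_sub (hg.const_mul ωm) hwg, integral_const_mul, hg0]
      ring
    have hnn : ∀ x, 0 ≤ ωm * g x - w x * g x := by
      intro x
      rcases le_or_gt (ld x) (τe * cstar) with h | h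
      · rw [hwe x h]
        have := hpos x (by linarith)
        nlinarith
      · rcases le_or_gt (ld x) (τh * cstar) with h' | h'
        · rw [hwm x h h']
          simp
        · rw [hwh x h']
          have := hneg x (by linarith)
          nlinarith
    have hp : 0 < ∫ x, (ωm * g x - w x * g x) ∂μ := by
      rw [integral_pos_iff_support_of_nonneg hnn hf]
      rcases lt_or_ge ωe ωm with h | h
      · refine hμe.trans_le (measure_mono ?_)
        intro x hx
        have hx' : ld x ≤ τe * cstar := hx
        have := hpos x (by linarith)
        rw [Function.mem_support, hwe x hx']
        have : 0 < (ωm - ωe) * g x := mul_pos (by linarith) this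
        intro h0
        linarith
      · refine hμh.trans_le (measure_mono ?_)
        intro x hx
        have hx' : τh * cstar < ld x := hx
        have := hneg x (by linarith)
        rw [Function.mem_support, hwh x hx']
        have : 0 < (ωm - ωh) * g x := mul_pos_of_neg_of_neg (by linarith) this
        intro h0
        linarith
    linarith
  refine ⟨hI, ?_⟩
  intro Errw c' hd _ hmono hder
  by_contra hc
  have hc' : c' ≤ cstar := not_lt.mp hc
  have h1 : 0 ≤ derivWithin Errw (Set.Ici c') cstar := hmono.monotoneOn.derivWithin_nonneg
  rw [(hd cstar).derivWithin (uniqueDiffOn_Ici c' cstar hc')] at h1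
  linarith
end

section
/- Let (Ω, μ) be a measure space, ld : Ω → ℝ a measurable learning-difficulty function, c* ∈ ℝ, and g : Ω → ℝ integrable with ∫_Ω g dμ = 0, satisfying the sign condition: g(x) > 0 whenever ld(x) < c*, g(x) < 0 whenever ld(x) > c*, and g(x) = 0 whenever ld(x) = c*. Let u : ℝ → ℝ be nonnegative and monotone nonincreasing, set w = u ∘ ld, and assume w·g is integrable and μ({x : g(x) ≠ 0 and w(x) ≠ u(c*)}) > 0. Then ∫_Ω w(x)·g(x) dμ(x) > 0; consequently, if the weighted generalization error Err^w : ℝ → ℝ is differentiable, unimodal with minimizer c'^* (strictly decreasing on (-∞, c'^*], strictly increasing on [c'^*, ∞)), and its derivative at c* equals ∫_Ω w(x)·g(x) dμ(x), then c'^* < c*. (Paper's Proposition 6: weighting samples by a nonincreasing, non-constant function of their learning difficulty makes the new optimal model complexity strictly smaller than the original optimal complexity c*.) -/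
open MeasureTheory

/-- Paper's Proposition 6: weighting samples by a nonnegative nonincreasing, non-constant
(in the stated sense) function `u` of their learning difficulty `ld` makes the derivative
of the weighted generalization error at `cstar` strictly positive, hence the new optimal
model complexity strictly smaller than `cstar`. -/
theorem prop6_nonincreasing_weighting
    {Ω : Type*} [MeasurableSpace Ω] (μ : Measure Ω)
    (ld : Ω → ℝ) (hld : Measurable ld) (cstar : ℝ)
    (g : Ω → ℝ) (hg : Integrable g μ) (hg0 : ∫ x, g x ∂μ = 0)
    (hpos : ∀ x, ld x < cstar → 0 < g x)
    (hneg : ∀ x, cstar < ld x → g x < 0)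
    (hzero : ∀ x, ld x = cstar → g x = 0)
    (u : ℝ → ℝ) (hunn : ∀ t, 0 ≤ u t) (huanti : Antitone u)
    (w : Ω → ℝ) (hw : ∀ x, w x = u (ld x))
    (hwg : Integrable (fun x => w x * g x) μ)
    (hnd : 0 < μ {x | g x ≠ 0 ∧ w x ≠ u cstar}) :
    0 < ∫ x, w x * g x ∂μ ∧
      (∀ (Errw : ℝ → ℝ) (c' : ℝ), Differentiable ℝ Errw →
        StrictAntiOn Errw (Set.Iic c') → StrictMonoOn Errw (Set.Ici c') →
        deriv Errw cstar = ∫ x, w x * g x ∂μ → c' < cstar) := by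
  have hI : 0 < ∫ x, w x * g x ∂μ := by
    have hint : Integrable (fun x => w x * g x - u cstar * g x) μ :=
      hwg.sub (hg.const_mul _)
    have heq : ∫ x, (w x * g x - u cstar * g x) ∂μ = ∫ x, w x * g x ∂μ := by
      rw [integral_sub hwg (hg.const_mul _), integral_const_mul, hg0]
      ring
    rw [← heq]
    have hnn : ∀ x, 0 ≤ w x * g x - u cstar * g x := by
      intro x
      rw [← sub_mul, hw x]
      rcases lt_trichotomy (ld x) cstar with h | h | h
      · exact mul_nonneg (sub_nonneg.2 (huanti h.le)) (hpos x h).le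
      · simp [hzero x h]
      · exact mul_nonneg_of_nonpos_of_nonpos (sub_nonpos.2 (huanti h.le)) (hneg x h).le
    rw [integral_pos_iff_support_of_nonneg hnn hint]
    refine hnd.trans_le (measure_mono ?_)
    rintro x ⟨h1, h2⟩
    rw [Function.mem_support, ← sub_mul]
    exact mul_ne_zero (sub_ne_zero.2 h2) h1
  refine ⟨hI, ?_⟩
  intro Errw c' hd ha _ hder
  by_contra hc
  rw [not_lt] at hc
  have hanti : AntitoneOn Errw (Set.Iic cstar) :=
    ha.antitoneOn.mono (Set.Iic_subset_Iic.2 hc)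
  have h1 : derivWithin Errw (Set.Iic cstar) cstar ≤ 0 := hanti.derivWithin_nonpos
  rw [(hd cstar).derivWithin (uniqueDiffWithinAt_Iic cstar)] at h1
  linarith
end

section
/- Let (Ω, μ) be a measure space, c* > 0, and let 0 < τ_e < 1 < τ_h. Let ld : Ω → ℝ be measurable and partition Ω into the easy region Ω^e = {x : ld(x) ≤ τ_e·c*}, the medium region Ω^m = {x : τ_e·c* < ld(x) ≤ τ_h·c*}, and the hard region Ω^h = {x : ld(x) > τ_h·c*}, with μ(Ω^e) > 0 and μ(Ω^h) > 0. Let g : Ω → ℝ be integrable with ∫_Ω g dμ = 0 and satisfying: g(x) > 0 whenever ld(x) < c*, g(x) < 0 whenever ld(x) > c*, and g(x) = 0 whenever ld(x) = c*. Let w take the constant nonnegative value ω_e on Ω^e, ω_m on Ω^m, and ω_h on Ω^h, with ω_e ≥ ω_m ≥ ω_h and ω_e > ω_h, and assume w·g is integrable. Then ∫_Ω w(x)·g(x) dμ(x) > 0; consequently, if the weighted generalization error Err^w : ℝ → ℝ is differentiable, unimodal with minimizer c'^*, and its derivative at c* equals ∫_Ω w(x)·g(x) dμ(x), then c'^* <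 c*. (Paper's Corollary 3: region weights nonincreasing from easy to hard samples, with strictly larger weight on easy than on hard, make the new optimal model complexity strictly smaller.) -/
open MeasureTheory

/-- Paper's Corollary 3: constant region weights nonincreasing from the easy region
through the medium region to the hard region, strictly larger on easy than on hard,
make the derivative of the weighted error at `cstar` strictly positive, hence the new
optimal model complexity strictly smaller than `cstar`. -/
theorem cor3_region_weights_decreasing
    {Ω : Type*} [MeasurableSpace Ω] (μ : Measure Ω)
    (cstar : ℝ) (hcstar : 0 < cstar)
    (τe τh : ℝ) (hτe0 : 0 < τe) (hτe1 : τe < 1) (hτh : 1 < τh)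
    (ld : Ω → ℝ) (hld : Measurable ld)
    (hμe : 0 < μ {x | ld x ≤ τe * cstar})
    (hμh : 0 < μ {x | τh * cstar < ld x})
    (g : Ω → ℝ) (hg : Integrable g μ) (hg0 : ∫ x, g x ∂μ = 0)
    (hpos : ∀ x, ld x < cstar → 0 < g x)
    (hneg : ∀ x, cstar < ld x → g x < 0)
    (hzero : ∀ x, ld x = cstar → g x = 0)
    (ωe ωm ωh : ℝ) (hωe : 0 ≤ ωe) (hωm : 0 ≤ ωm) (hωh : 0 ≤ ωh)
    (hem : ωm ≤ ωe) (hmh : ωh ≤ ωm) (heh : ωh < ωe)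
    (w : Ω → ℝ)
    (hwe : ∀ x, ld x ≤ τe * cstar → w x = ωe)
    (hwm : ∀ x, τe * cstar < ld x → ld x ≤ τh * cstar → w x = ωm)
    (hwh : ∀ x, τh * cstar < ld x → w x = ωh)
    (hwg : Integrable (fun x => w x * g x) μ) :
    0 < ∫ x, w x * g x ∂μ ∧
      (∀ (Errw : ℝ → ℝ) (c' : ℝ), Differentiable ℝ Errw →
        StrictAntiOn Errw (Set.Iic c') → StrictMonoOn Errw (Set.Ici c') →
        deriv Errw cstar = ∫ x, w x * g x ∂μ → c' < cstar) := by
  have h1 : τe * cstar < cstar := by nlinarith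
  have h2 : cstar < τh * cstar := by nlinarith
  have hI : 0 < ∫ x, w x * g x ∂μ := by
    have hint : Integrable (fun x => w x * g x - ωm * g x) μ := hwg.sub (hg.const_mul ωm)
    have heq : ∫ x, w x * g x ∂μ = ∫ x, (w x * g x - ωm * g x) ∂μ := by
      rw [integral_sub hwg (hg.const_mul ωm), integral_const_mul, hg0]
      simp
    have hnn : 0 ≤ fun x => w x * g x - ωm * g x := by
      intro x
      change 0 ≤ w x * g x - ωm * g x
      rcases le_or_gt (ld x) (τe * cstar) with h | h
      · rw [hwe x h]
        nlinarith [hpos x (by linarith)]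
      · rcases le_or_gt (ld x) (τh * cstar) with h' | h'
        · rw [hwm x h h']
          simp
        · rw [hwh x h']
          nlinarith [hneg x (by linarith)]
    rw [heq, integral_pos_iff_support_of_nonneg hnn hint]
    rcases hem.lt_or_eq with hlt | hE
    · refine hμe.trans_le (measure_mono ?_)
      intro x hx
      have hx' : ld x ≤ τe * cstar := hx
      have := hpos x (by linarith)
      rw [Function.mem_support, hwe x hx']
      have := mul_pos (sub_pos.2 hlt) this
      rw [← sub_mul]
      exact this.ne'
    · refine hμh.trans_le (measure_mono ?_)
      intro x hx
      have hx' : τh * cstar < ld x := hx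
      have := hneg x (by linarith)
      rw [Function.mem_support, hwh x hx']
      have hlt : ωh < ωm := by linarith
      have := mul_pos_of_neg_of_neg (sub_neg.2 hlt) this
      rw [← sub_mul]
      exact this.ne'
  refine ⟨hI, ?_⟩
  intro Errw c' hd ha _ hder
  by_contra hc
  have hc : cstar ≤ c' := not_lt.1 hc
  have hanti : AntitoneOn Errw (Set.Iic cstar) :=
    ha.antitoneOn.mono (Set.Iic_subset_Iic.2 hc)
  have hle : derivWithin Errw (Set.Iic cstar) cstar ≤ 0 := hanti.derivWithin_nonpos
  rw [(hd cstar).derivWithin (uniqueDiffOn_Iic cstar cstar Set.self_mem_Iic), hder] at hle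
  linarith
end

section
/- Let (Ω, μ) be a measure space, L > 0, and ld : Ω → ℝ a measurable learning-difficulty function with 0 < ld(x) ≤ L for every x ∈ Ω. For γ ∈ ℝ define the focal-type weight w_γ(x) = (ld(x)/L)^γ. Fix γ₁ < γ₂. Let c₁ > 0, and let g : Ω → ℝ be such that w_{γ₁}·g and w_{γ₂}·g are integrable, ∫_Ω w_{γ₁}(x)·g(x) dμ(x) = 0 (first-order optimality of c₁ for Err^{w_{γ₁}}), g(x) > 0 whenever ld(x) < c₁, g(x) < 0 whenever ld(x) > c₁, g(x) = 0 whenever ld(x) = c₁, and μ({x : g(x) ≠ 0}) > 0. Then ∫_Ω w_{γ₂}(x)·g(x) dμ(x) < 0; consequently, if Err^{w_{γ₂}} : ℝ → ℝ is differentiable, unimodal with minimizer c₂, and its derivative at c₁ equals ∫_Ω w_{γ₂}(x)·g(x) dμ(x), then c₂ > c₁. (Paper's Corollary 4 on Focal loss: for weights w_γ(x) = (LD(x)/max LD)^γ, a larger exponent γ yields a strictly larger optimal model complexity, i.e., γ₁ < γ₂ implies c*(γ₁) < c*(γ₂).) -/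
open MeasureTheory Real

/-- Paper's Corollary 4 (Focal loss): for focal-type weights `w_γ(x) = (ld(x)/L)^γ`
with `0 < ld ≤ L`, if `c₁` is first-order optimal for the `γ₁`-weighted error and
`γ₁ < γ₂`, then the derivative of the `γ₂`-weighted error at `c₁` is strictly negative,
hence the new optimal complexity `c₂` satisfies `c₂ > c₁`. -/
theorem cor4_focal_loss_gamma
    {Ω : Type*} [MeasurableSpace Ω] (μ : Measure Ω)
    (L : ℝ) (hL : 0 < L)
    (ld : Ω → ℝ) (hld : Measurable ld)
    (hldpos : ∀ x, 0 < ld x) (hldle : ∀ x, ld x ≤ L)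
    (γ₁ γ₂ : ℝ) (hγ : γ₁ < γ₂)
    (c₁ : ℝ) (hc₁ : 0 < c₁)
    (g : Ω → ℝ)
    (w₁ w₂ : Ω → ℝ)
    (hw₁ : ∀ x, w₁ x = (ld x / L) ^ γ₁)
    (hw₂ : ∀ x, w₂ x = (ld x / L) ^ γ₂)
    (hint₁ : Integrable (fun x => w₁ x * g x) μ)
    (hint₂ : Integrable (fun x => w₂ x * g x) μ)
    (hopt : ∫ x, w₁ x * g x ∂μ = 0)
    (hpos : ∀ x, ld x < c₁ → 0 < g x)
    (hneg : ∀ x, c₁ < ld x → g x < 0)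
    (hzero : ∀ x, ld x = c₁ → g x = 0)
    (hnd : 0 < μ {x | g x ≠ 0}) :
    ∫ x, w₂ x * g x ∂μ < 0 ∧
      (∀ (Errw : ℝ → ℝ) (c₂ : ℝ), Differentiable ℝ Errw →
        StrictAntiOn Errw (Set.Iic c₂) → StrictMonoOn Errw (Set.Ici c₂) →
        deriv Errw c₁ = ∫ x, w₂ x * g x ∂μ → c₂ > c₁) := by
  have key : ∫ x, w₂ x * g x ∂μ < 0 := by
    set k : ℝ := (c₁ / L) ^ (γ₂ - γ₁) with hk
    have hF : ∀ x, k * (w₁ x * g x) - w₂ x * g x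
        = w₁ x * (g x * (k - (ld x / L) ^ (γ₂ - γ₁))) := by
      intro x
      have h : w₂ x = w₁ x * (ld x / L) ^ (γ₂ - γ₁) := by
        rw [hw₁, hw₂, ← Real.rpow_add (div_pos (hldpos x) hL)]
        congr 1
        ring
      rw [h]
      ring
    have hw₁pos : ∀ x, 0 < w₁ x := fun x => by
      rw [hw₁]
      exact Real.rpow_pos_of_pos (div_pos (hldpos x) hL) _
    have hδ : 0 < γ₂ - γ₁ := sub_pos.mpr hγ
    have hFpos : ∀ x, g x ≠ 0 → 0 < k * (w₁ x * g x) - w₂ x * g x := by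
      intro x hx
      rw [hF]
      refine mul_pos (hw₁pos x) ?_
      rcases lt_trichotomy (ld x) c₁ with h | h | h
      · refine mul_pos (hpos x h) (sub_pos.mpr ?_)
        exact Real.rpow_lt_rpow (div_pos (hldpos x) hL).le
          (div_lt_div_of_pos_right h hL) hδ
      · exact absurd (hzero x h) hx
      · refine mul_pos_of_neg_of_neg (hneg x h) (sub_neg.mpr ?_)
        exact Real.rpow_lt_rpow (div_pos hc₁ hL).le
          (div_lt_div_of_pos_right h hL) hδ
    have hFnn : ∀ x, 0 ≤ k * (w₁ x * g x) - w₂ x * g x := by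
      intro x
      by_cases hx : g x = 0
      · simp [hx]
      · exact (hFpos x hx).le
    have hI : Integrable (fun x => k * (w₁ x * g x) - w₂ x * g x) μ :=
      (hint₁.const_mul k).sub hint₂
    have h0 : 0 < ∫ x, (k * (w₁ x * g x) - w₂ x * g x) ∂μ := by
      rw [integral_pos_iff_support_of_nonneg hFnn hI]
      refine lt_of_lt_of_le hnd (measure_mono ?_)
      intro x hx
      exact (hFpos x hx).ne'
    rw [integral_sub (hint₁.const_mul k) hint₂, integral_const_mul, hopt] at h0
    linarith
  refine ⟨key, ?_⟩
  intro Errw c₂ hd _ hmono hderiv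
  by_contra hcon
  have hle : c₂ ≤ c₁ := not_lt.mp hcon
  have hm : MonotoneOn Errw (Set.Ici c₁) :=
    hmono.monotoneOn.mono (Set.Ici_subset_Ici.mpr hle)
  have h1 : 0 ≤ derivWithin Errw (Set.Ici c₁) c₁ := hm.derivWithin_nonneg
  rw [(hd c₁).derivWithin (uniqueDiffOn_Ici c₁ c₁ Set.self_mem_Ici)] at h1
  linarith
end
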